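/- arXiv:2107.06521 — 2 statements merged into one kernel-verified Lean document; each statement's English description precedes it below -/
import Mathlib

section
/- Let M > 0 and 0 ≤ a ≤ M, and set r₊ = M + √(M² − a²) (so that r₊² − 2Mr₊ + a² = 0 and r₊² + a² = 2Mr₊). Then for every real θ, (M r₊⁴ − a² r₊² (r₊ sin²θ + M cos²θ)) / (4 (r₊² + a² cos²θ)(r₊² + a²)) = (r₊² − M r₊)/(8M). In particular the coefficient f appearing in the transport equation on the future event horizon is the θ-independent constant −(r₊² − Mr₊)/(8M). -/
open Real

/-! Where `Δ = r² - 2Mr + a²` vanishes, the numerator of the coefficient is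
`r² (r - M) (r² + a² cos² θ)`, while `r² + a² = 2Mr`; the only factor depending on `θ` cancels. -/

/-- The Kerr horizon function `Δ`; its real roots are the horizon radii. -/
def kerrDelta {R : Type*} [CommRing R] (M a r : R) : R :=
  r ^ 2 - 2 * M * r + a ^ 2

section CommRing

variable {R : Type*} [CommRing R] {M a r : R}

theorem kerrDelta_eq_zero_iff : kerrDelta M a r = 0 ↔ r ^ 2 + a ^ 2 = 2 * M * r := by
  rw [kerrDelta, sub_add_eq_add_sub, sub_eq_zero]

theorem horizon_numerator_eq_mul {s c : R} (hΔ : kerrDelta M a r = 0)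
    (hsc : s ^ 2 + c ^ 2 = 1) :
    M * r ^ 4 - a ^ 2 * r ^ 2 * (r * s ^ 2 + M * c ^ 2) =
      r ^ 2 * (r - M) * (r ^ 2 + a ^ 2 * c ^ 2) := by
  have ha : a ^ 2 = 2 * M * r - r ^ 2 := eq_sub_of_add_eq' (kerrDelta_eq_zero_iff.mp hΔ)
  have hs : s ^ 2 = 1 - c ^ 2 := eq_sub_of_add_eq hsc
  rw [hs, ha]
  ring

end CommRing

/-- The radius `r₊` of the outer horizon. Since `√` vanishes on negative reals, it is a root of
`kerrDelta M a` only in the black-hole range `a² ≤ M²`. -/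
noncomputable def outerHorizonRadius (M a : ℝ) : ℝ :=
  M + √(M ^ 2 - a ^ 2)

section Real

variable {M a r : ℝ}

theorem outerHorizonRadius_pos (hM : 0 < M) : 0 < outerHorizonRadius M a :=
  add_pos_of_pos_of_nonneg hM (sqrt_nonneg _)

theorem kerrDelta_outerHorizonRadius (haM : a ^ 2 ≤ M ^ 2) :
    kerrDelta M a (outerHorizonRadius M a) = 0 := by
  have hsq : √(M ^ 2 - a ^ 2) ^ 2 = M ^ 2 - a ^ 2 := sq_sqrt (sub_nonneg.mpr haM)
  rw [kerrDelta, outerHorizonRadius]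
  linear_combination hsq

theorem mass_ne_zero_of_kerrDelta_eq_zero (hr : r ≠ 0) (hΔ : kerrDelta M a r = 0) : M ≠ 0 := by
  rintro rfl
  have hsum : r ^ 2 + a ^ 2 = 0 := by simpa using kerrDelta_eq_zero_iff.mp hΔ
  have hpos : 0 < r ^ 2 + a ^ 2 := by positivity
  exact hpos.ne' hsum

theorem horizon_transport_coefficient_general (hr : r ≠ 0) (hΔ : kerrDelta M a r = 0) (θ : ℝ) :
    (M * r ^ 4 - a ^ 2 * r ^ 2 * (r * sin θ ^ 2 + M * cos θ ^ 2)) /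
        (4 * (r ^ 2 + a ^ 2 * cos θ ^ 2) * (r ^ 2 + a ^ 2)) =
      (r ^ 2 - M * r) / (8 * M) := by
  have hM : M ≠ 0 := mass_ne_zero_of_kerrDelta_eq_zero hr hΔ
  have hρ : r ^ 2 + a ^ 2 * cos θ ^ 2 ≠ 0 := by positivity
  rw [horizon_numerator_eq_mul hΔ (sin_sq_add_cos_sq θ), kerrDelta_eq_zero_iff.mp hΔ]
  field_simp
  ring

end Real

/-- At the outer horizon radius `r₊ = M + √(M² − a²)` of a Kerr black hole
(`M > 0`, `0 ≤ a ≤ M`), the coefficient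
`(M r₊⁴ − a² r₊² (r₊ sin²θ + M cos²θ)) / (4 (r₊² + a² cos²θ)(r₊² + a²))`
is independent of `θ` and equals `(r₊² − M r₊)/(8M)`. -/
theorem horizon_transport_coefficient (M a : ℝ) (hM : 0 < M) (ha0 : 0 ≤ a) (haM : a ≤ M) :
    ∀ θ : ℝ,
      (M * (M + Real.sqrt (M ^ 2 - a ^ 2)) ^ 4
          - a ^ 2 * (M + Real.sqrt (M ^ 2 - a ^ 2)) ^ 2
            * ((M + Real.sqrt (M ^ 2 - a ^ 2)) * Real.sin θ ^ 2 + M * Real.cos θ ^ 2))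
        / (4 * ((M + Real.sqrt (M ^ 2 - a ^ 2)) ^ 2 + a ^ 2 * Real.cos θ ^ 2)
            * ((M + Real.sqrt (M ^ 2 - a ^ 2)) ^ 2 + a ^ 2))
      = ((M + Real.sqrt (M ^ 2 - a ^ 2)) ^ 2 - M * (M + Real.sqrt (M ^ 2 - a ^ 2)))
          / (8 * M) := by
  exact horizon_transport_coefficient_general (outerHorizonRadius_pos hM).ne'
    (kerrDelta_outerHorizonRadius (pow_le_pow_left₀ ha0 haM 2))
end

section
/- Let M > 0 and 0 < a < M, set r₊ = M + √(M² − a²), fix C ≥ 1, and define h(r) = 2(r − r₊) + 4M log(r/r₊) + 3M²(r₊ − r)²/(r₊ r²) + 2M arctan((C−1)M/r) − 2M arctan((C−1)M/r₊). Then for every r > r₊ (so that Δ = r² − 2Mr + a² > 0 and 0 ≤ a²Δ/(r²+a²)² ≤ 1), the derivative h'(r) satisfies the double inequality 0 ≤ ((a²+r²)/Δ)·(1 − √(1 − a²Δ/(r²+a²)²)) < h'(r) < ((a²+r²)/Δ)·(1 + √(1 − a²Δ/(r²+a²)²)). This inequality guarantees that each hyperboloid 𝓗_τ = {t + r_* −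 h(r) = τ} is a spacelike (Cauchy) hypersurface. -/
open Real

/-!
The bounds on `h'` are the two roots of the quadratic `Δ p² − 2 (r² + a²) p + a²`. Since
`1 - √(1 - x) ≤ x`, the smaller root is at most `a² / (r² + a²) ≤ 1`, while `h' > 2` because the
arctangent costs at most `M / r`. The roots add up to `2 (a² + r²) / Δ`, so the upper bound follows
from `h' + a² / (r² + a²) < 2 (a² + r²) / Δ`. Bounding `a² / (r² + a²)` by `a² / r²`, the arctangent
contribution to `h'` by `M² / r²` and `r₊` below by `M`, and cancelling the common part
`2 + 4M / r`, one is left with a polynomial inequality whose left side increases and whose right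
side decreases with `a²`, so that the extremal case `a² = M²` is the worst one.
-/

lemma two_mul_div_sq_add_sq_le_inv (s : ℝ) {r : ℝ} (hr : 0 < r) :
    2 * s / (s ^ 2 + r ^ 2) ≤ r⁻¹ := by
  rw [inv_eq_one_div, div_le_div_iff₀ (by positivity) hr, one_mul]
  exact two_mul_le_add_sq s r

lemma neg_div_sq_le_two_mul_div_sq_add_sq {m s r : ℝ} (hm : 0 ≤ m) (hs : -m ≤ 2 * s)
    (hr : r ≠ 0) : -(m / r ^ 2) ≤ 2 * s / (s ^ 2 + r ^ 2) := by
  rw [← neg_div, div_le_div_iff₀ (by positivity) (by positivity)]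
  linarith [mul_le_mul_of_nonneg_right hs (sq_nonneg r), mul_nonneg hm (sq_nonneg s)]

lemma one_sub_sqrt_one_sub_le {x : ℝ} (hx : 0 ≤ x) : 1 - √(1 - x) ≤ x :=
  sub_le_comm.mp (le_sqrt_self_iff.mpr (sub_le_self 1 hx))

namespace Kerr

/-- The horizon function `Δ = r² − 2Mr + a²`. -/
def delta (M a r : ℝ) : ℝ := r ^ 2 - 2 * M * r + a ^ 2

/-- The outer horizon radius `r₊`, the larger root of `Δ` when `|a| ≤ M`. -/
noncomputable def outerHorizon (M a : ℝ) : ℝ := M + √(M ^ 2 - a ^ 2)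

/-- The smaller root `p` of `Δ p² − 2 (r² + a²) p + a² = 0`. A level set of `t + r_* − h(r)` is
spacelike at every latitude when `h'` lies strictly between the two roots; this quadratic is the
equatorial one, which is the most restrictive. -/
noncomputable def lowerNullSlope (M a r : ℝ) : ℝ :=
  (a ^ 2 + r ^ 2) / delta M a r * (1 - √(1 - a ^ 2 * delta M a r / (r ^ 2 + a ^ 2) ^ 2))

/-- The larger root `p` of `Δ p² − 2 (r² + a²) p + a² = 0`. -/
noncomputable def upperNullSlope (M a r : ℝ) : ℝ :=
  (a ^ 2 + r ^ 2) / delta M a r * (1 + √(1 - a ^ 2 * delta M a r / (r ^ 2 + a ^ 2) ^ 2))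

/-- The derivative `h'(r)` of the hyperboloidal height function, as an explicit formula. -/
noncomputable def heightDeriv (M a C r : ℝ) : ℝ :=
  2 + 4 * M / r + 6 * M ^ 2 * (r - outerHorizon M a) / r ^ 3
    - 2 * (C - 1) * M ^ 2 / ((C - 1) ^ 2 * M ^ 2 + r ^ 2)

variable {M a C r : ℝ}

lemma le_outerHorizon (M a : ℝ) : M ≤ outerHorizon M a :=
  le_add_of_nonneg_right (sqrt_nonneg _)

lemma delta_pos (hr : outerHorizon M a < r) : 0 < delta M a r := by
  have : M ^ 2 - a ^ 2 < (r - M) ^ 2 := lt_sq_of_sqrt_lt (lt_sub_iff_add_lt'.mpr hr)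
  unfold delta
  linarith

lemma sq_mul_delta_div_le_one (hM : 0 ≤ M) (hr : 0 ≤ r) :
    a ^ 2 * delta M a r / (r ^ 2 + a ^ 2) ^ 2 ≤ 1 := by
  refine div_le_one_of_le₀ ?_ (by positivity)
  calc a ^ 2 * delta M a r
      ≤ a ^ 2 * (r ^ 2 + a ^ 2) := by
        unfold delta
        gcongr
        exact sub_le_self _ (by positivity)
    _ ≤ (r ^ 2 + a ^ 2) * (r ^ 2 + a ^ 2) := by
        gcongr
        exact le_add_of_nonneg_left (sq_nonneg r)
    _ = (r ^ 2 + a ^ 2) ^ 2 := (sq _).symm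

lemma lowerNullSlope_nonneg (hΔ : 0 < delta M a r) : 0 ≤ lowerNullSlope M a r := by
  refine mul_nonneg (by positivity) (sub_nonneg.mpr (sqrt_le_one.mpr (sub_le_self _ ?_)))
  positivity

lemma lowerNullSlope_le (hΔ : 0 < delta M a r) (hr : r ≠ 0) :
    lowerNullSlope M a r ≤ a ^ 2 / (r ^ 2 + a ^ 2) :=
  calc lowerNullSlope M a r
      ≤ (a ^ 2 + r ^ 2) / delta M a r * (a ^ 2 * delta M a r / (r ^ 2 + a ^ 2) ^ 2) := by
        unfold lowerNullSlope
        gcongr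
        exact one_sub_sqrt_one_sub_le (by positivity)
    _ = a ^ 2 / (r ^ 2 + a ^ 2) := by
        rw [add_comm (a ^ 2)]
        field_simp

lemma lowerNullSlope_add_upperNullSlope (M a r : ℝ) :
    lowerNullSlope M a r + upperNullSlope M a r = 2 * (a ^ 2 + r ^ 2) / delta M a r := by
  unfold lowerNullSlope upperNullSlope
  ring

lemma two_lt_heightDeriv (C : ℝ) (hM : 0 < M) (hr : outerHorizon M a < r) :
    2 < heightDeriv M a C r := by
  have hr₀ : 0 < r := hM.trans ((le_outerHorizon M a).trans_lt hr)
  have hrat : 0 ≤ 6 * M ^ 2 * (r - outerHorizon M a) / r ^ 3 := by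
    have := sub_pos.mpr hr
    positivity
  have harctan : 2 * (C - 1) * M ^ 2 / ((C - 1) ^ 2 * M ^ 2 + r ^ 2) ≤ M / r :=
    calc 2 * (C - 1) * M ^ 2 / ((C - 1) ^ 2 * M ^ 2 + r ^ 2)
        = M * (2 * ((C - 1) * M) / (((C - 1) * M) ^ 2 + r ^ 2)) := by ring
      _ ≤ M * r⁻¹ := by gcongr; exact two_mul_div_sq_add_sq_le_inv _ hr₀
      _ = M / r := (div_eq_mul_inv M r).symm
  have hlog : M / r < 4 * M / r := by gcongr; linarith
  unfold heightDeriv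
  linarith

lemma heightDeriv_le (hM : 0 ≤ M) (hC : 1 / 2 ≤ C) (hr : 0 < r) :
    heightDeriv M a C r ≤ 2 + 4 * M / r + 6 * M ^ 2 * (r - M) / r ^ 3 + M ^ 2 / r ^ 2 := by
  have hrat : 6 * M ^ 2 * (r - outerHorizon M a) / r ^ 3 ≤ 6 * M ^ 2 * (r - M) / r ^ 3 := by
    gcongr
    exact le_outerHorizon M a
  have hCM : -M ≤ 2 * ((C - 1) * M) := by linarith [mul_le_mul_of_nonneg_right hC hM]
  have harctan : -(M ^ 2 / r ^ 2) ≤ 2 * (C - 1) * M ^ 2 / ((C - 1) ^ 2 * M ^ 2 + r ^ 2) :=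
    calc -(M ^ 2 / r ^ 2)
        = M * -(M / r ^ 2) := by ring
      _ ≤ M * (2 * ((C - 1) * M) / (((C - 1) * M) ^ 2 + r ^ 2)) := by
        gcongr
        exact neg_div_sq_le_two_mul_div_sq_add_sq hM hCM hr.ne'
      _ = 2 * (C - 1) * M ^ 2 / ((C - 1) ^ 2 * M ^ 2 + r ^ 2) := by ring
  unfold heightDeriv
  linarith

lemma two_mul_sq_add_sq_div_delta (hΔ : delta M a r ≠ 0) (hr : r ≠ 0) :
    2 * (a ^ 2 + r ^ 2) / delta M a r
      = 2 + 4 * M / r + 4 * M * (2 * M * r - a ^ 2) / (r * delta M a r) := by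
  field_simp
  unfold delta
  ring

lemma extremal_mul_sq_lt (hM : 0 < M) (hr : M ≤ r) :
    (6 * M ^ 2 * (r - M) + 2 * M ^ 2 * r) * (r - M) ^ 2 < 4 * M * r ^ 2 * (2 * M * r - M ^ 2) := by
  have : 0 ≤ r - M := sub_nonneg.mpr hr
  have hgap : 0 < 18 * M ^ 3 * (r - M) ^ 2 + 16 * M ^ 4 * (r - M) + 4 * M ^ 5 := by positivity
  linarith

lemma mul_delta_lt (hM : 0 < M) (ha : |a| ≤ M) (hr : M ≤ r) (hΔ : 0 ≤ delta M a r) :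
    (6 * M ^ 2 * (r - M) + (M ^ 2 + a ^ 2) * r) * delta M a r
      < 4 * M * r ^ 2 * (2 * M * r - a ^ 2) := by
  have hr₀ : 0 < r := hM.trans_le hr
  have : 0 ≤ r - M := sub_nonneg.mpr hr
  have hasq : a ^ 2 ≤ M ^ 2 := sq_le_sq' (neg_le_of_abs_le ha) (le_of_abs_le ha)
  calc (6 * M ^ 2 * (r - M) + (M ^ 2 + a ^ 2) * r) * delta M a r
      ≤ (6 * M ^ 2 * (r - M) + 2 * M ^ 2 * r) * (r - M) ^ 2 := by
        gcongr
        · linarith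
        · unfold delta
          linarith
    _ < 4 * M * r ^ 2 * (2 * M * r - M ^ 2) := extremal_mul_sq_lt hM hr
    _ ≤ 4 * M * r ^ 2 * (2 * M * r - a ^ 2) := by gcongr

lemma heightDeriv_add_lt (hM : 0 < M) (ha : |a| ≤ M) (hC : 1 / 2 ≤ C) (hr : M ≤ r)
    (hΔ : 0 < delta M a r) :
    heightDeriv M a C r + a ^ 2 / (r ^ 2 + a ^ 2) < 2 * (a ^ 2 + r ^ 2) / delta M a r := by
  have hr₀ : 0 < r := hM.trans_le hr
  have hsq : a ^ 2 / (r ^ 2 + a ^ 2) ≤ a ^ 2 / r ^ 2 := by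
    gcongr
    exact le_add_of_nonneg_right (sq_nonneg a)
  have hpoly : 6 * M ^ 2 * (r - M) / r ^ 3 + M ^ 2 / r ^ 2 + a ^ 2 / r ^ 2
      < 4 * M * (2 * M * r - a ^ 2) / (r * delta M a r) :=
    calc 6 * M ^ 2 * (r - M) / r ^ 3 + M ^ 2 / r ^ 2 + a ^ 2 / r ^ 2
        = (6 * M ^ 2 * (r - M) + (M ^ 2 + a ^ 2) * r) * delta M a r / (r ^ 3 * delta M a r) := by
          field_simp
          ring
      _ < 4 * M * r ^ 2 * (2 * M * r - a ^ 2) / (r ^ 3 * delta M a r) :=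
          div_lt_div_of_pos_right (mul_delta_lt hM ha hr hΔ.le) (by positivity)
      _ = 4 * M * (2 * M * r - a ^ 2) / (r * delta M a r) := by
          field_simp
  rw [two_mul_sq_add_sq_div_delta hΔ.ne' hr₀.ne']
  linarith [heightDeriv_le (a := a) hM.le hC hr₀]

end Kerr

open Kerr in
theorem height_function_causal_condition_general {M a C r : ℝ} (hM : 0 < M) (ha : |a| ≤ M)
    (hC : 1 / 2 ≤ C) (hr : outerHorizon M a < r) :
    0 < delta M a r ∧
      a ^ 2 * delta M a r / (r ^ 2 + a ^ 2) ^ 2 ≤ 1 ∧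
      0 ≤ lowerNullSlope M a r ∧
      lowerNullSlope M a r < heightDeriv M a C r ∧
      heightDeriv M a C r < upperNullSlope M a r := by
  have hMr : M < r := (le_outerHorizon M a).trans_lt hr
  have hr₀ : 0 < r := hM.trans hMr
  have hΔ : 0 < delta M a r := delta_pos hr
  have hlower : lowerNullSlope M a r ≤ a ^ 2 / (r ^ 2 + a ^ 2) := lowerNullSlope_le hΔ hr₀.ne'
  refine ⟨hΔ, sq_mul_delta_div_le_one hM.le hr₀.le, lowerNullSlope_nonneg hΔ, ?_, ?_⟩
  · have hone : a ^ 2 / (r ^ 2 + a ^ 2) ≤ 1 :=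
      div_le_one_of_le₀ (le_add_of_nonneg_left (sq_nonneg r)) (by positivity)
    linarith [two_lt_heightDeriv C hM hr]
  · linarith [heightDeriv_add_lt hM ha hC hMr.le hΔ, lowerNullSlope_add_upperNullSlope M a r]

/-- For `r > r₊ = M + √(M² − a²)` (so `Δ = r² − 2Mr + a² > 0` and
`0 ≤ a²Δ/(r²+a²)² ≤ 1`), the derivative of the hyperboloidal height function satisfies
`0 ≤ ((a²+r²)/Δ)(1 − √(1 − a²Δ/(r²+a²)²)) < h'(r) < ((a²+r²)/Δ)(1 + √(1 − a²Δ/(r²+a²)²))`,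
which guarantees that the hyperboloids `𝓗_τ` are spacelike Cauchy hypersurfaces. -/
theorem height_function_causal_condition (M a C : ℝ) (hM : 0 < M) (ha0 : 0 < a)
    (haM : a < M) (hC : 1 ≤ C) :
    ∀ r : ℝ, M + Real.sqrt (M ^ 2 - a ^ 2) < r →
      0 < r ^ 2 - 2 * M * r + a ^ 2 ∧
      a ^ 2 * (r ^ 2 - 2 * M * r + a ^ 2) / (r ^ 2 + a ^ 2) ^ 2 ≤ 1 ∧
      0 ≤ (a ^ 2 + r ^ 2) / (r ^ 2 - 2 * M * r + a ^ 2)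
            * (1 - Real.sqrt (1 - a ^ 2 * (r ^ 2 - 2 * M * r + a ^ 2)
                / (r ^ 2 + a ^ 2) ^ 2)) ∧
      (a ^ 2 + r ^ 2) / (r ^ 2 - 2 * M * r + a ^ 2)
            * (1 - Real.sqrt (1 - a ^ 2 * (r ^ 2 - 2 * M * r + a ^ 2)
                / (r ^ 2 + a ^ 2) ^ 2))
        < 2 + 4 * M / r
            + 6 * M ^ 2 * (r - (M + Real.sqrt (M ^ 2 - a ^ 2))) / r ^ 3
            - 2 * (C - 1) * M ^ 2 / ((C - 1) ^ 2 * M ^ 2 + r ^ 2) ∧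
      2 + 4 * M / r
            + 6 * M ^ 2 * (r - (M + Real.sqrt (M ^ 2 - a ^ 2))) / r ^ 3
            - 2 * (C - 1) * M ^ 2 / ((C - 1) ^ 2 * M ^ 2 + r ^ 2)
        < (a ^ 2 + r ^ 2) / (r ^ 2 - 2 * M * r + a ^ 2)
            * (1 + Real.sqrt (1 - a ^ 2 * (r ^ 2 - 2 * M * r + a ^ 2)
                / (r ^ 2 + a ^ 2) ^ 2)) := by
  intro r hr
  exact height_function_causal_condition_general hM (abs_le.mpr ⟨by linarith, haM.le⟩)
    (by linarith) hr
end
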